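/- arXiv:2305.17599 — 3 statements merged into one kernel-verified Lean document; each statement's English description precedes it below -/
import Mathlib

section
/- Let x < y be points of [0,1) lying in the same continuity interval, i.e. no point of the set {T^{-j}(0) : 0 ≤ j ≤ n−1} lies in the arc (x, y]. Then for every index 0 ≤ i ≤ n−1 the ordered eigenvalues of the periodic restriction satisfy λ·γ₋·C₋·ν([x,y]) ≤ μ̃_i(y) − μ̃_i(x) ≤ λ·γ₊·C₊·ν([x,y]); in particular each μ̃_i is strictly increasing and bi-Lipschitz with respect to the invariant measure ν on each such interval. -/
/-!
Write `m = ν([x, y])`. For each `j < n` the points `T^j x < T^j y` have the same integer part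
(`floor_pow_eq`): an integer `k` between them would give the point `T^{-j}(0) + k` of `(x, y]`,
which is then its own fractional part. Hence the bi-Lipschitz bound for `f` on `[0, 1)` applies to
`f(T^j y) - f(T^j x)`, and the comparison of length and measure together with the invariance of
`ν` puts this difference between `γ₋ C₋ m` and `γ₊ C₊ m`.

The matrices `H̃_n(y)` and `H̃_n(x)` differ by the diagonal matrix with entries
`λ (f(T^j y) - f(T^j x))`, so Weyl's monotonicity principle (`weyl_monotone`), applied in both
directions, bounds all eigenvalue increments. The principle is proved by the Courant-Fischer
dimension count: some nonzero vector is orthogonal to the eigenvectors of the first matrix with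
index below `i` and to those of the second with index above `i`; comparing the two quadratic
forms at this vector compares the `i`-th eigenvalues.
-/

open MeasureTheory Polynomial Filter

noncomputable section

attribute [local instance] Matrix.normedAddCommGroup

/-- Dirichlet restriction `H_n(x)` of the Schrödinger operator with potential
`n ↦ λ f (T^n x)` to `[0, n-1]`: tridiagonal with diagonal `λ f (T^j x)` and `1`
on the two off-diagonals. -/
def HDir (lam : ℝ) (f : ℝ → ℝ) (T : Equiv.Perm ℝ) (x : ℝ) (n : ℕ) :
    Matrix (Fin n) (Fin n) ℝ :=
  Matrix.of fun i j : Fin n =>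
    (if i = j then lam * f ((T ^ (i : ℕ)) x) else 0) +
    (if (i : ℕ) + 1 = (j : ℕ) ∨ (j : ℕ) + 1 = (i : ℕ) then 1 else 0)

/-- Periodic restriction `H̃_n(x)`: the Dirichlet restriction with additional
entries `1` in the corners `(0, n-1)` and `(n-1, 0)`. -/
def HPer (lam : ℝ) (f : ℝ → ℝ) (T : Equiv.Perm ℝ) (x : ℝ) (n : ℕ) :
    Matrix (Fin n) (Fin n) ℝ :=
  HDir lam f T x n +
    Matrix.of (fun i j : Fin n =>
      if ((i : ℕ) = 0 ∧ (j : ℕ) = n - 1) ∨ ((i : ℕ) = n - 1 ∧ (j : ℕ) = 0) then (1 : ℝ) else 0)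

/-- `P_n(x,E) = det (H_n(x) - E)`. -/
def Pdet (lam : ℝ) (f : ℝ → ℝ) (T : Equiv.Perm ℝ) (x E : ℝ) (n : ℕ) : ℝ :=
  (HDir lam f T x n - E • (1 : Matrix (Fin n) (Fin n) ℝ)).det

/-- `P_n(x,E)` with integer index, with the conventions `P_0 = 1` and `P_n = 0` for `n < 0`. -/
def PdetI (lam : ℝ) (f : ℝ → ℝ) (T : Equiv.Perm ℝ) (x E : ℝ) (n : ℤ) : ℝ :=
  if 0 ≤ n then Pdet lam f T x E n.toNat else 0

/-- `P̃_n(x,E) = det (H̃_n(x) - E)`. -/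
def PtildeDet (lam : ℝ) (f : ℝ → ℝ) (T : Equiv.Perm ℝ) (x E : ℝ) (n : ℕ) : ℝ :=
  (HPer lam f T x n - E • (1 : Matrix (Fin n) (Fin n) ℝ)).det

/-- One-step transfer matrix `A_i(x,E)`. -/
def transferA (lam : ℝ) (f : ℝ → ℝ) (T : Equiv.Perm ℝ) (E x : ℝ) (i : ℕ) :
    Matrix (Fin 2) (Fin 2) ℝ :=
  !![E - lam * f ((T ^ i) x), -1; 1, 0]

/-- `n`-step transfer matrix `M_n(x,E) = A_{n-1} ⋯ A_0`. -/
def transferM (lam : ℝ) (f : ℝ → ℝ) (T : Equiv.Perm ℝ) (E x : ℝ) :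
    ℕ → Matrix (Fin 2) (Fin 2) ℝ
  | 0 => 1
  | m + 1 => transferA lam f T E x m * transferM lam f T E x m

/-- Dirichlet restriction `H_{[a, a+m-1]}(x)` of the operator to the integer
interval starting at `a : ℤ` of length `m`. -/
def HBox (lam : ℝ) (f : ℝ → ℝ) (T : Equiv.Perm ℝ) (x : ℝ) (a : ℤ) (m : ℕ) :
    Matrix (Fin m) (Fin m) ℝ :=
  Matrix.of fun i j : Fin m =>
    (if i = j then lam * f ((T ^ (a + ((i : ℕ) : ℤ))) x) else 0) +
    (if (i : ℕ) + 1 = (j : ℕ) ∨ (j : ℕ) + 1 = (i : ℕ) then 1 else 0)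

/-- Green function `G_{x,E,[a,a+m-1]} = (H_{[a,a+m-1]}(x) - E)⁻¹`. -/
def GBox (lam : ℝ) (f : ℝ → ℝ) (T : Equiv.Perm ℝ) (x E : ℝ) (a : ℤ) (m : ℕ) :
    Matrix (Fin m) (Fin m) ℝ :=
  (HBox lam f T x a m - E • (1 : Matrix (Fin m) (Fin m) ℝ))⁻¹

/-- A point `n : ℤ` is `(x, c, qk)`-regular: there is an interval `[a, b]` of length
`qk` (`b = a + qk - 1`) containing `n` with `|n - a| ≥ qk/5`, `|n - b| ≥ qk/5` and
`|G(a,n)| ≤ e^{-c|n-a|}`, `|G(n,b)| ≤ e^{-c|n-b|}`. -/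
def RegularPt (lam : ℝ) (f : ℝ → ℝ) (T : Equiv.Perm ℝ) (x E c : ℝ) (qk : ℕ) (n : ℤ) : Prop :=
  ∃ (a : ℤ) (i0 i j : Fin qk),
    (i0 : ℕ) = 0 ∧ (j : ℕ) = qk - 1 ∧ n = a + ((i : ℕ) : ℤ) ∧
    (qk : ℝ) / 5 ≤ ((i : ℕ) : ℝ) ∧ (qk : ℝ) / 5 ≤ ((j : ℕ) : ℝ) - ((i : ℕ) : ℝ) ∧
    |GBox lam f T x E a qk i0 i| ≤ Real.exp (-c * ((i : ℕ) : ℝ)) ∧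
    |GBox lam f T x E a qk i j| ≤ Real.exp (-c * (((j : ℕ) : ℝ) - ((i : ℕ) : ℝ)))

/-- The `ν`-measure of the positively oriented arc of the circle `ℝ/ℤ` from `u` to `v`
(computed for a `1`-periodic measure `ν` on `ℝ`). -/
def arcMeasure (ν : Measure ℝ) (u v : ℝ) : ℝ :=
  (ν (Set.Icc u (u + Int.fract (v - u)))).toReal

/-- The `ν`-measure of the smaller of the two complementary arcs between `u` and `v`. -/
def arcDist (ν : Measure ℝ) (u v : ℝ) : ℝ :=
  min (arcMeasure ν u v) (arcMeasure ν v u)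

/-- The measure of the gap of the orbit point `T^j x` in the partition of the circle
by `x, Tx, …, T^{qk-1}x`: the measure of the positively oriented arc from `T^j x` to the
closest (in the positive direction) other orbit point. -/
def gapMeas (ν : Measure ℝ) (T : Equiv.Perm ℝ) (x : ℝ) (qk : ℕ) (j : ℕ) : ℝ :=
  sInf ((fun j' : ℕ => arcMeasure ν ((T ^ j) x) ((T ^ j') x)) '' {j' | j' < qk ∧ j' ≠ j})

/-- `β(α) = limsup_k (ln q_{k+1}) / q_k` computed from the sequence of
continued-fraction denominators. -/
def cfBeta (q : ℕ → ℕ) : ℝ :=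
  Filter.limsup (fun k : ℕ => Real.log (q (k + 1) : ℝ) / (q k : ℝ)) Filter.atTop


/-! ### Eigenvalues of real symmetric matrices -/

/-- The increasing enumeration of the roots of the characteristic polynomial of a real symmetric
matrix is realised by an orthonormal eigenbasis. -/
lemma exists_eigenbasis {n : ℕ} {A : Matrix (Fin n) (Fin n) ℝ} (hA : A.IsHermitian)
    {m : Fin n → ℝ} (hm : Monotone m) (hchar : A.charpoly = ∏ i, (X - Polynomial.C (m i))) :
    ∃ b : OrthonormalBasis (Fin n) ℝ (EuclideanSpace ℝ (Fin n)),
      ∀ j, Matrix.toEuclideanLin A (b j) = m j • b j := by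
  have hroots : Multiset.map m Finset.univ.val = Multiset.map hA.eigenvalues Finset.univ.val := by
    have h := hA.roots_charpoly_eq_eigenvalues
    rw [hchar, Polynomial.roots_prod _ _
      (Finset.prod_ne_zero_iff.mpr fun i _ => Polynomial.X_sub_C_ne_zero _)] at h
    simpa using h
  set σ := Tuple.sort hA.eigenvalues with hσ
  have hsort : Monotone (hA.eigenvalues ∘ σ) := Tuple.monotone_sort _
  have heq : m = hA.eigenvalues ∘ σ := by
    apply List.ofFn_injective
    refine List.Perm.eq_of_sortedLE hm.sortedLE_ofFn hsort.sortedLE_ofFn ?_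
    refine List.Perm.trans ?_ (Equiv.Perm.ofFn_comp_perm σ hA.eigenvalues).symm
    rw [← Multiset.coe_eq_coe, ← Fin.univ_val_map, ← Fin.univ_val_map]
    exact hroots
  refine ⟨hA.eigenvectorBasis.reindex σ.symm, fun j => ?_⟩
  have h := hA.mulVec_eigenvectorBasis (σ j)
  ext k
  have hk := congrFun h k
  simpa [heq, Matrix.toLpLin_apply] using hk

/-- The quadratic form of a symmetric matrix in an orthonormal eigenbasis. -/
lemma inner_eq_sum_eigenbasis {n : ℕ} {A : Matrix (Fin n) (Fin n) ℝ}
    {m : Fin n → ℝ} (b : OrthonormalBasis (Fin n) ℝ (EuclideanSpace ℝ (Fin n)))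
    (hA : A.IsHermitian) (hb : ∀ j, Matrix.toEuclideanLin A (b j) = m j • b j)
    (v : EuclideanSpace ℝ (Fin n)) :
    inner ℝ v (Matrix.toEuclideanLin A v) = ∑ j, m j * inner ℝ (b j) v ^ 2 := by
  rw [← b.sum_inner_mul_inner]
  refine Finset.sum_congr rfl fun j _ => ?_
  rw [← (Matrix.isSymmetric_toEuclideanLin_iff.mpr hA) (b j) v, hb, real_inner_smul_left,
    real_inner_comm]
  ring

/-- Weyl's monotonicity principle: a lower bound `c` for the quadratic form of `B - A` on unit
vectors is a lower bound for the increments of all ordered eigenvalues. -/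
lemma weyl_monotone {n : ℕ} {A B : Matrix (Fin n) (Fin n) ℝ} (hA : A.IsHermitian)
    (hB : B.IsHermitian) {a b : Fin n → ℝ} (ha : Monotone a) (hb : Monotone b)
    (hAchar : A.charpoly = ∏ i, (X - Polynomial.C (a i)))
    (hBchar : B.charpoly = ∏ i, (X - Polynomial.C (b i))) (c : ℝ)
    (hAB : ∀ v : EuclideanSpace ℝ (Fin n),
      inner ℝ v (Matrix.toEuclideanLin A v) + c * ‖v‖ ^ 2
        ≤ inner ℝ v (Matrix.toEuclideanLin B v))
    (i : Fin n) : a i + c ≤ b i := by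
  obtain ⟨p, hp⟩ := exists_eigenbasis hA ha hAchar
  obtain ⟨q, hq⟩ := exists_eigenbasis hB hb hBchar
  -- The `n - 1` conditions `⟪p j, v⟫ = 0` for `j < i` and `⟪q j, v⟫ = 0` for `j > i`
  -- have a common nonzero solution `v` in dimension `n`.
  let F : EuclideanSpace ℝ (Fin n) →ₗ[ℝ] ({j : Fin n // j ≠ i} → ℝ) :=
    LinearMap.pi fun j => if (j : Fin n) < i then innerₛₗ ℝ (p j) else innerₛₗ ℝ (q j)
  have hker : LinearMap.ker F ≠ ⊥ := by
    apply LinearMap.ker_ne_bot_of_finrank_lt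
    have := i.pos
    simp only [Module.finrank_fintype_fun_eq_card, finrank_euclideanSpace, Fintype.card_fin,
      ne_eq, Fintype.card_subtype_compl, Fintype.card_subtype_eq]
    omega
  obtain ⟨v, hv, hv0⟩ := Submodule.exists_mem_ne_zero_of_ne_bot hker
  have hF : ∀ j : {j : Fin n // j ≠ i}, F v j = 0 := fun j => congrFun hv j
  have hpv : ∀ j < i, inner ℝ (p j) v = 0 := fun j hj => by
    simpa [F, hj] using hF ⟨j, hj.ne⟩
  have hqv : ∀ j, i < j → inner ℝ (q j) v = 0 := fun j hj => by
    simpa [F, hj.not_gt] using hF ⟨j, hj.ne'⟩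
  have hnorm : 0 < ‖v‖ ^ 2 := by positivity
  have hlow : a i * ‖v‖ ^ 2 ≤ inner ℝ v (Matrix.toEuclideanLin A v) := by
    rw [inner_eq_sum_eigenbasis p hA hp, ← p.sum_sq_norm_inner_right v, Finset.mul_sum]
    refine Finset.sum_le_sum fun j _ => ?_
    rw [Real.norm_eq_abs, sq_abs]
    rcases lt_or_ge j i with hj | hj
    · simp [hpv j hj]
    · exact mul_le_mul_of_nonneg_right (ha hj) (sq_nonneg _)
  have hupp : inner ℝ v (Matrix.toEuclideanLin B v) ≤ b i * ‖v‖ ^ 2 := by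
    rw [inner_eq_sum_eigenbasis q hB hq, ← q.sum_sq_norm_inner_right v, Finset.mul_sum]
    refine Finset.sum_le_sum fun j _ => ?_
    rw [Real.norm_eq_abs, sq_abs]
    rcases lt_or_ge i j with hj | hj
    · simp [hqv j hj]
    · exact mul_le_mul_of_nonneg_right (hb hj) (sq_nonneg _)
  have hv' := hAB v
  exact le_of_mul_le_mul_right (by linarith) hnorm

/-- Weyl's principle for a diagonal perturbation. -/
lemma weyl_diagonal {n : ℕ} {A B : Matrix (Fin n) (Fin n) ℝ} (hA : A.IsHermitian)
    (hB : B.IsHermitian) {a b : Fin n → ℝ} (ha : Monotone a) (hb : Monotone b)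
    (hAchar : A.charpoly = ∏ i, (X - Polynomial.C (a i)))
    (hBchar : B.charpoly = ∏ i, (X - Polynomial.C (b i))) (c : ℝ) (d : Fin n → ℝ)
    (hd : B = A + Matrix.diagonal d) (hc : ∀ j, c ≤ d j) (i : Fin n) : a i + c ≤ b i := by
  refine weyl_monotone hA hB ha hb hAchar hBchar c (fun v => ?_) i
  have hdiag : inner ℝ v (Matrix.toEuclideanLin (Matrix.diagonal d) v) = ∑ j, d j * v j ^ 2 := by
    simp only [PiLp.inner_apply, Matrix.toLpLin_apply, Matrix.mulVec_diagonal]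
    refine Finset.sum_congr rfl fun j _ => ?_
    simp
    ring
  rw [hd, map_add, LinearMap.add_apply, inner_add_right, hdiag, EuclideanSpace.real_norm_sq_eq,
    Finset.mul_sum]
  gcongr with j
  exact hc j

/-! ### The periodic restriction on a continuity interval -/

lemma HPer_isHermitian (lam : ℝ) (f : ℝ → ℝ) (T : Equiv.Perm ℝ) (x : ℝ) (n : ℕ) :
    (HPer lam f T x n).IsHermitian := by
  ext i j
  simp only [HPer, HDir, Matrix.conjTranspose_apply, Matrix.add_apply, Matrix.of_apply,
    star_trivial]
  by_cases h : i = j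
  · subst h; rfl
  · rw [if_neg h, if_neg (Ne.symm h)]
    congr 2
    · simp only [or_comm]
    · exact propext (by tauto)

lemma HPer_eq_add_diagonal (lam : ℝ) (f : ℝ → ℝ) (T : Equiv.Perm ℝ) (x y : ℝ) (n : ℕ) :
    HPer lam f T y n = HPer lam f T x n +
      Matrix.diagonal fun j : Fin n => lam * f ((T ^ (j : ℕ)) y) - lam * f ((T ^ (j : ℕ)) x) := by
  ext i j
  simp only [HPer, HDir, Matrix.add_apply, Matrix.of_apply, Matrix.diagonal_apply]
  split_ifs <;> ring

lemma pow_strictMono {T : Equiv.Perm ℝ} (hT : StrictMono ⇑T) (j : ℕ) : StrictMono ⇑(T ^ j) := by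
  rw [Equiv.Perm.coe_pow]
  exact hT.iterate j

lemma pow_add_int {T : Equiv.Perm ℝ} (hT : ∀ t : ℝ, T (t + 1) = T t + 1) (j : ℕ) (t : ℝ)
    (k : ℤ) : (T ^ j) (t + k) = (T ^ j) t + k := by
  have hone : ∀ t, (T ^ j) (t + 1) = (T ^ j) t + 1 := by
    induction j with
    | zero => simp
    | succ j ih => intro t; rw [pow_succ, Equiv.Perm.mul_apply, hT, ih, Equiv.Perm.mul_apply]
  generalize (⇑(T ^ j)) = g at hone ⊢
  induction k using Int.induction_on generalizing t with
  | zero => simp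
  | succ k ih => push_cast at ih ⊢; rw [← add_assoc, hone, ih, add_assoc]
  | pred k ih =>
    have h := hone (t + ((-(k : ℤ) - 1 : ℤ) : ℝ))
    have h2 := ih t
    have h3 : t + ((-(k : ℤ) - 1 : ℤ) : ℝ) + 1 = t + ((-(k : ℤ) : ℤ) : ℝ) := by
      push_cast; ring
    rw [h3, h2] at h
    push_cast at h ⊢
    linarith

lemma measure_pow_Icc {T : Equiv.Perm ℝ} {ν : Measure ℝ} (hT : StrictMono ⇑T)
    (hν : MeasureTheory.Measure.map (⇑T) ν = ν) (j : ℕ) (x y : ℝ) :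
    ν (Set.Icc ((T ^ j) x) ((T ^ j) y)) = ν (Set.Icc x y) := by
  induction j with
  | zero => simp
  | succ j ih =>
    rw [← ih]
    conv_lhs => rw [← hν]
    rw [Measure.map_apply hT.monotone.measurable measurableSet_Icc]
    congr 1
    ext t
    simp [pow_succ', hT.le_iff_le]

/-- If no point of `T^{-j}(ℤ)` lies in `(x, y]`, then `T^j x` and `T^j y` lie in the same
unit interval `[k, k + 1)`. -/
lemma floor_pow_eq {T : Equiv.Perm ℝ} (hTmono : StrictMono ⇑T)
    (hTper : ∀ t : ℝ, T (t + 1) = T t + 1) {x y : ℝ} (hx : 0 ≤ x) (hxy : x < y) (hy : y < 1)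
    (j : ℕ) (hcont : Int.fract ((T ^ (-(j : ℤ))) 0) ∉ Set.Ioc x y) :
    ⌊(T ^ j) x⌋ = ⌊(T ^ j) y⌋ := by
  have hmono := pow_strictMono hTmono j
  by_contra hne
  have hlt : ⌊(T ^ j) x⌋ < ⌊(T ^ j) y⌋ :=
    lt_of_le_of_ne (Int.floor_le_floor (hmono hxy).le) hne
  set k := ⌊(T ^ j) y⌋
  set s := (T ^ (-(j : ℤ))) 0
  have hs : (T ^ j) s = 0 := by simp [s]
  have hsk : (T ^ j) (s + k) = k := by rw [pow_add_int hTper, hs, zero_add]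
  have h1 : x < s + k := by
    rw [← hmono.lt_iff_lt, hsk]
    exact Int.floor_lt.mp hlt
  have h2 : s + k ≤ y := by
    rw [← hmono.le_iff_le, hsk]
    exact Int.floor_le _
  apply hcont
  have hfr : Int.fract s = s + k := by
    rw [← Int.fract_add_intCast s k]
    exact Int.fract_eq_self.mpr ⟨by linarith, by linarith⟩
  rw [hfr]
  exact ⟨h1, h2⟩

lemma sub_bounds_of_floor_eq {f : ℝ → ℝ} {γm γp : ℝ} (hfper : ∀ t : ℝ, f (t + 1) = f t)
    (hfLip : ∀ u v : ℝ, 0 ≤ u → u < v → v < 1 →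
      γm * (v - u) ≤ f v - f u ∧ f v - f u ≤ γp * (v - u))
    {u v : ℝ} (huv : u < v) (hfl : ⌊u⌋ = ⌊v⌋) :
    γm * (v - u) ≤ f v - f u ∧ f v - f u ≤ γp * (v - u) := by
  have hfract : ∀ t, f (Int.fract t) = f t := fun t => by
    have hp : Function.Periodic f 1 := hfper
    have h := hp.sub_zsmul_eq ⌊t⌋ (x := t)
    rwa [zsmul_one] at h
  have hsub : Int.fract v - Int.fract u = v - u := by
    rw [Int.fract, Int.fract, hfl]
    ring
  have h := hfLip (Int.fract u) (Int.fract v) (Int.fract_nonneg u) (by linarith)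
    (Int.fract_lt_one v)
  rwa [hsub, hfract, hfract] at h

/-- On each continuity interval the box eigenvalue functions are
bi-Lipschitz monotone with respect to the invariant measure:
`λ γ₋ C₋ ν([x,y]) ≤ μ̃_i(y) − μ̃_i(x) ≤ λ γ₊ C₊ ν([x,y])`. -/
theorem eigenvalue_biLipschitz
    (f : ℝ → ℝ) (T : Equiv.Perm ℝ) (ν : Measure ℝ)
    (γm γp Cm Cp lam α : ℝ) (n : ℕ) (μ : ℝ → Fin n → ℝ)
    (hγm : 0 < γm) (hγp : 0 < γp) (hlam : 0 < lam)
    (hfper : ∀ t : ℝ, f (t + 1) = f t) (hf0 : f 0 = 0)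
    (hf1 : Filter.Tendsto f (nhdsWithin 1 (Set.Iio 1)) (nhds 1))
    (hfLip : ∀ u v : ℝ, 0 ≤ u → u < v → v < 1 →
      γm * (v - u) ≤ f v - f u ∧ f v - f u ≤ γp * (v - u))
    (hTmono : StrictMono ⇑T) (hTper : ∀ t : ℝ, T (t + 1) = T t + 1)
    (hαirr : Irrational α)
    (hrot : Filter.Tendsto (fun m : ℕ => (T ^ m) 0 / (m : ℝ)) Filter.atTop (nhds α))
    (hCm : 0 < Cm) (hCp : 0 < Cp)
    (hνprob : ν (Set.Ico (0 : ℝ) 1) = 1)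
    (hνinv : MeasureTheory.Measure.map (⇑T) ν = ν)
    (hνper : MeasureTheory.Measure.map (fun t : ℝ => t + 1) ν = ν)
    (hcomp : ∀ u v : ℝ, u ≤ v → v ≤ u + 1 →
      Cm * (ν (Set.Icc u v)).toReal ≤ v - u ∧ v - u ≤ Cp * (ν (Set.Icc u v)).toReal)
    (hμmono : ∀ z : ℝ, Monotone (μ z))
    (hμeig : ∀ z : ℝ, (HPer lam f T z n).charpoly = ∏ i, (X - Polynomial.C (μ z i)))
    (x y : ℝ) (hx : 0 ≤ x) (hxy : x < y) (hy : y < 1)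
    (hcont : ∀ j < n, Int.fract ((T ^ (-(j : ℤ))) 0) ∉ Set.Ioc x y)
    (i : Fin n) :
    lam * γm * Cm * (ν (Set.Icc x y)).toReal ≤ μ y i - μ x i ∧
    μ y i - μ x i ≤ lam * γp * Cp * (ν (Set.Icc x y)).toReal := by
  have hdiff : ∀ j : Fin n,
      lam * γm * Cm * (ν (Set.Icc x y)).toReal
        ≤ lam * f ((T ^ (j : ℕ)) y) - lam * f ((T ^ (j : ℕ)) x) ∧
      lam * f ((T ^ (j : ℕ)) y) - lam * f ((T ^ (j : ℕ)) x)
        ≤ lam * γp * Cp * (ν (Set.Icc x y)).toReal := by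
    intro j
    have hmono := pow_strictMono hTmono (j : ℕ)
    have hlen : (T ^ (j : ℕ)) y ≤ (T ^ (j : ℕ)) x + 1 := by
      have h := pow_add_int hTper (j : ℕ) x 1
      rw [Int.cast_one] at h
      rw [← h]
      exact hmono.monotone (by linarith)
    obtain ⟨hl, hu⟩ := sub_bounds_of_floor_eq hfper hfLip (hmono hxy)
      (floor_pow_eq hTmono hTper hx hxy hy j (hcont j j.isLt))
    obtain ⟨hl', hu'⟩ := hcomp _ _ (hmono hxy).le hlen
    rw [measure_pow_Icc hTmono hνinv] at hl' hu'
    have h1 := mul_le_mul_of_nonneg_left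
      ((mul_le_mul_of_nonneg_left hl' hγm.le).trans hl) hlam.le
    have h2 := mul_le_mul_of_nonneg_left
      (hu.trans (mul_le_mul_of_nonneg_left hu' hγp.le)) hlam.le
    constructor <;> linarith
  have hlow := weyl_diagonal (HPer_isHermitian lam f T x n) (HPer_isHermitian lam f T y n)
    (hμmono x) (hμmono y) (hμeig x) (hμeig y) _ _ (HPer_eq_add_diagonal lam f T x y n)
    (fun j => (hdiff j).1) i
  -- The upper bound is the lower bound `-λγ₊C₊ν([x,y])` for the reversed increment.
  have hupp := weyl_diagonal (HPer_isHermitian lam f T y n) (HPer_isHermitian lam f T x n)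
    (hμmono y) (hμmono x) (hμeig y) (hμeig x) (-(lam * γp * Cp * (ν (Set.Icc x y)).toReal)) _
    (HPer_eq_add_diagonal lam f T y x n) (fun j => by linarith [(hdiff j).2]) i
  exact ⟨by linarith, by linarith⟩
end
end

section
/- Let n = q_k. For all x, y in the circle and every index 0 ≤ i ≤ q_k − 1, the ordered eigenvalues of the periodic restriction satisfy |μ̃_i(x) − μ̃_i(y)| ≤ λγ₊C₊/q_{k+1} + 2λγ₊C₊/q_k ≤ 3λγ₊C₊/q_k. -/
/-!
The distribution function `h` of `ν` conjugates `T` to the rotation by `α` (`exists_conjugacy`) and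
satisfies `v - u ≤ C₊ (h v - h u)` for `u ≤ v`. The jump of `f` at the integers is downwards, so
`f v - f u ≤ γ₊ (v - u)` holds for all `u ≤ v` (`periodic_upper_lipschitz`). Thus moving a point to
the right by `ν`-measure `c` increases `λ f` by at most `λ γ₊ C₊ c`, and by Weyl's inequality
(`weyl_upper`) an entrywise upper bound on the increase of the potential bounds the increase of each
ordered eigenvalue. Only such one-sided bounds are used; exchanging `x` and `y` gives the absolute
value.

Put `n = q k` and `δ = n α - p`, where `p / n` is the convergent and `|δ| ≤ 1 / q (k + 1)`. The
spectrum of the periodic matrix is unchanged when its potential is rotated cyclically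
(`charpoly_rotate`). If `δ ≥ 0`, the orbit `x, …, T ^ (n - 1) x` has a point `T ^ j x` to the left of
`y` at `ν`-distance at most `2 / n` (`exists_rotation_hit`). The potential of `y` is then compared
with that of `x` rotated by `j`: the entries `T ^ (l + j) x` with `l + j ≥ n` are replaced by
`T ^ (l + j - n) x`, which lies further to the left by `δ`, so the potential grows by at most
`λ γ₊ C₊ (2 / n + δ)`. If `δ ≤ 0` the same argument applies to a point `T ^ j y` just to the right
of `x`, with the potential of `y` rotated.
-/

open MeasureTheory Polynomial Filter

noncomputable section

attribute [local instance] Matrix.normedAddCommGroup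

/-! ### Weyl's inequality -/

theorem quadForm_eq {n : ℕ} {A : Matrix (Fin n) (Fin n) ℝ} (hA : A.IsHermitian)
    (v : EuclideanSpace ℝ (Fin n)) :
    inner ℝ v (Matrix.toEuclideanLin A v) =
      ∑ j, hA.eigenvalues j * (inner ℝ (hA.eigenvectorBasis j) v) ^ 2 := by
  rw [← hA.eigenvectorBasis.sum_inner_mul_inner]
  refine Finset.sum_congr rfl fun j _ => ?_
  have hs := Matrix.isSymmetric_toEuclideanLin_iff.2 hA
  have hb : Matrix.toEuclideanLin A (hA.eigenvectorBasis j) =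
      hA.eigenvalues j • hA.eigenvectorBasis j := by
    ext l
    have := congrFun (hA.mulVec_eigenvectorBasis j) l
    simpa using this
  have : inner ℝ (hA.eigenvectorBasis j) (Matrix.toEuclideanLin A v) =
      hA.eigenvalues j * inner ℝ (hA.eigenvectorBasis j) v := by
    rw [← hs, hb, inner_smul_left]; simp
  rw [this, real_inner_comm]; ring

theorem normSq_eq {n : ℕ} {A : Matrix (Fin n) (Fin n) ℝ} (hA : A.IsHermitian)
    (v : EuclideanSpace ℝ (Fin n)) :
    ‖v‖ ^ 2 = ∑ j, (inner ℝ (hA.eigenvectorBasis j) v) ^ 2 := by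
  rw [← real_inner_self_eq_norm_sq, ← hA.eigenvectorBasis.sum_inner_mul_inner]
  refine Finset.sum_congr rfl fun j _ => ?_
  rw [real_inner_comm]; ring

/-- Any enumeration of the roots of the characteristic polynomial has the same counting function as
Mathlib's enumeration of the eigenvalues. -/
theorem card_eigenvalues {n : ℕ} {A : Matrix (Fin n) (Fin n) ℝ} (hA : A.IsHermitian)
    {a : Fin n → ℝ} (ha : A.charpoly = ∏ i, (X - Polynomial.C (a i)))
    (P : ℝ → Prop) [DecidablePred P] :
    Fintype.card {j // P (hA.eigenvalues j)} = Fintype.card {j // P (a j)} := by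
  have h1 := hA.roots_charpoly_eq_eigenvalues
  have h2 : A.charpoly.roots = Multiset.map a Finset.univ.val := by
    rw [ha, Polynomial.roots_prod _ _ (by
      simp [Finset.prod_ne_zero_iff, Polynomial.X_sub_C_ne_zero])]
    simp
  have h3 : Multiset.countP P (Multiset.map hA.eigenvalues Finset.univ.val) =
      Multiset.countP P (Multiset.map a Finset.univ.val) := by
    rw [← h2, h1]; rfl
  rw [Multiset.countP_map, Multiset.countP_map] at h3
  rw [Fintype.card_subtype, Fintype.card_subtype]
  exact h3

/-- Weyl's inequality for a diagonal perturbation bounded above by `c`. By dimension counting there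
is a nonzero `v` whose quadratic form under `A` is at most `a i * ‖v‖ ^ 2` and under
`A + diagonal w` at least `b i * ‖v‖ ^ 2`. -/
theorem weyl_upper {n : ℕ} {A : Matrix (Fin n) (Fin n) ℝ} (hA : A.IsHermitian)
    {w : Fin n → ℝ} {c : ℝ} (hw : ∀ i, w i ≤ c)
    {a b : Fin n → ℝ} (ham : Monotone a) (hbm : Monotone b)
    (ha : A.charpoly = ∏ i, (X - Polynomial.C (a i)))
    (hb : (A + Matrix.diagonal w).charpoly = ∏ i, (X - Polynomial.C (b i))) (i : Fin n) :
    b i ≤ a i + c := by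
  classical
  have hB : (A + Matrix.diagonal w).IsHermitian :=
    hA.add (Matrix.isHermitian_diagonal w)
  -- the kernel of `Φ` is orthogonal to the eigenvectors of `A` with eigenvalue above `a i` and to
  -- those of `A + diagonal w` with eigenvalue below `b i`
  let Φ : EuclideanSpace ℝ (Fin n) →ₗ[ℝ]
      ({j // a i < hA.eigenvalues j} → ℝ) × ({j // hB.eigenvalues j < b i} → ℝ) :=
    LinearMap.prod
      (LinearMap.pi fun j => (innerSL ℝ (hA.eigenvectorBasis j.1)).toLinearMap)
      (LinearMap.pi fun j => (innerSL ℝ (hB.eigenvectorBasis j.1)).toLinearMap)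
  have hcardA : Fintype.card {j // a i < a j} ≤ n - 1 - i := by
    rw [Fintype.card_subtype, ← Fin.card_Ioi]
    refine Finset.card_le_card fun j hj => ?_
    simp only [Finset.mem_filter, Finset.mem_univ, true_and] at hj
    exact Finset.mem_Ioi.2 (ham.reflect_lt hj)
  have hcardB : Fintype.card {j // b j < b i} ≤ i := by
    rw [Fintype.card_subtype, ← Fin.card_Iio]
    refine Finset.card_le_card fun j hj => ?_
    simp only [Finset.mem_filter, Finset.mem_univ, true_and] at hj
    exact Finset.mem_Iio.2 (hbm.reflect_lt hj)
  have hlt : Module.finrank ℝ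
      (({j // a i < hA.eigenvalues j} → ℝ) × ({j // hB.eigenvalues j < b i} → ℝ)) <
      Module.finrank ℝ (EuclideanSpace ℝ (Fin n)) := by
    rw [Module.finrank_prod, Module.finrank_fintype_fun_eq_card,
      Module.finrank_fintype_fun_eq_card, finrank_euclideanSpace_fin,
      card_eigenvalues hA ha (fun t => a i < t), card_eigenvalues hB hb (fun t => t < b i)]
    have := i.2
    omega
  obtain ⟨v, hv, hv0⟩ := (Submodule.ne_bot_iff _).1 (LinearMap.ker_ne_bot_of_finrank_lt (f := Φ) hlt)
  have hΦ : Φ v = 0 := hv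
  have hvA : ∀ j, a i < hA.eigenvalues j → inner ℝ (hA.eigenvectorBasis j) v = 0 := fun j hj =>
    congrFun (congrArg Prod.fst hΦ) ⟨j, hj⟩
  have hvB : ∀ j, hB.eigenvalues j < b i → inner ℝ (hB.eigenvectorBasis j) v = 0 := fun j hj =>
    congrFun (congrArg Prod.snd hΦ) ⟨j, hj⟩
  have h1 : inner ℝ v (Matrix.toEuclideanLin A v) ≤ a i * ‖v‖ ^ 2 := by
    rw [quadForm_eq hA, normSq_eq hA, Finset.mul_sum]
    refine Finset.sum_le_sum fun j _ => ?_
    rcases lt_or_ge (a i) (hA.eigenvalues j) with h | h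
    · simp [hvA j h]
    · exact mul_le_mul_of_nonneg_right h (sq_nonneg _)
  have h2 : b i * ‖v‖ ^ 2 ≤ inner ℝ v (Matrix.toEuclideanLin (A + Matrix.diagonal w) v) := by
    rw [quadForm_eq hB, normSq_eq hB, Finset.mul_sum]
    refine Finset.sum_le_sum fun j _ => ?_
    rcases lt_or_ge (hB.eigenvalues j) (b i) with h | h
    · simp [hvB j h]
    · exact mul_le_mul_of_nonneg_right h (sq_nonneg _)
  have h3 : inner ℝ v (Matrix.toEuclideanLin (Matrix.diagonal w) v) ≤ c * ‖v‖ ^ 2 := by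
    rw [EuclideanSpace.norm_sq_eq, Finset.mul_sum, PiLp.inner_apply]
    refine Finset.sum_le_sum fun j _ => ?_
    simp [Matrix.mulVec_diagonal]
    nlinarith [hw j, sq_nonneg (v j)]
  rw [map_add, LinearMap.add_apply, inner_add_right] at h2
  have hpos : 0 < ‖v‖ ^ 2 := by positivity
  by_contra! hcon
  nlinarith

/-! ### Continued fractions and the orbit of a rotation -/

/-- The numerators of the convergents are integers; the claim for two consecutive indices is the
induction hypothesis the recurrence needs. -/
theorem exists_int_nums (v : ℝ) (n : ℕ) :
    (∃ p : ℤ, ((GenContFract.of v).contsAux n).a = p) ∧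
    (∃ p : ℤ, ((GenContFract.of v).contsAux (n + 1)).a = p) := by
  induction n with
  | zero => exact ⟨⟨1, by simp [GenContFract.contsAux]⟩, ⟨⌊v⌋, by simp [GenContFract.contsAux]⟩⟩
  | succ n ih =>
    obtain ⟨⟨p, hp⟩, ⟨p', hp'⟩⟩ := ih
    refine ⟨⟨p', hp'⟩, ?_⟩
    rcases h : (GenContFract.of v).s.get? n with _ | gp
    · refine ⟨p', ?_⟩
      rw [GenContFract.contsAux_stable_step_of_terminated (by exact h), hp']
    · obtain ⟨h1, z, hz⟩ := GenContFract.of_partNum_eq_one_and_exists_int_partDen_eq h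
      refine ⟨z * p' + p, ?_⟩
      rw [GenContFract.contsAux_recurrence h rfl rfl, hp, hp', h1, hz]
      push_cast; ring

/-- The denominator `q k` comes with a coprime numerator `p` such that
`|q k * α - p| ≤ 1 / q (k + 1)`. -/
theorem exists_convergent {α : ℝ} (hα : Irrational α) {q : ℕ → ℕ} (hqpos : ∀ m : ℕ, 0 < q m)
    (hq : ∀ m : ℕ, ((q m : ℕ) : ℝ) = (GenContFract.of α).dens m) (k : ℕ) :
    ∃ p : ℤ, IsCoprime p (q k : ℤ) ∧ |(q k : ℝ) * α - p| ≤ 1 / (q (k + 1) : ℝ) := by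
  have hnt : ¬ (GenContFract.of α).TerminatedAt k := by
    intro h
    obtain ⟨r, hr⟩ := (GenContFract.terminates_iff_rat α).1 ⟨k, h⟩
    exact hα ⟨r, hr.symm⟩
  obtain ⟨p, hp⟩ : ∃ p : ℤ, (GenContFract.of α).nums k = p := (exists_int_nums α k).2
  obtain ⟨p', hp'⟩ : ∃ p : ℤ, (GenContFract.of α).nums (k + 1) = p := (exists_int_nums α (k + 1)).2
  refine ⟨p, ?_, ?_⟩
  · have hdet := SimpContFract.determinant (s := SimpContFract.of α) (n := k) hnt
    change (GenContFract.of α).nums k * (GenContFract.of α).dens (k + 1) -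
      (GenContFract.of α).dens k * (GenContFract.of α).nums (k + 1) = _ at hdet
    rw [hp, hp', ← hq, ← hq] at hdet
    have hdet' : p * (q (k + 1) : ℤ) - (q k : ℤ) * p' = (-1) ^ (k + 1) := by exact_mod_cast hdet
    refine ⟨(-1) ^ (k + 1) * q (k + 1), -(-1) ^ (k + 1) * p', ?_⟩
    have h1 : ((-1 : ℤ) ^ (k + 1)) * (-1) ^ (k + 1) = 1 := by
      rw [← mul_pow]; simp
    linear_combination (-1) ^ (k + 1) * hdet' + h1
  · have h := GenContFract.abs_sub_convs_le hnt
    rw [GenContFract.conv_eq_num_div_den, hp, ← hq, ← hq] at h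
    have hk : (0 : ℝ) < q k := by exact_mod_cast hqpos k
    have hk1 : (0 : ℝ) < q (k + 1) := by exact_mod_cast hqpos (k + 1)
    have : (q k : ℝ) * α - p = q k * (α - p / q k) := by field_simp
    rw [this, abs_mul, abs_of_pos hk]
    calc _ ≤ (q k : ℝ) * (1 / (q k * q (k + 1))) := by gcongr
      _ = _ := by field_simp

/-- If `n β` exceeds `p` by at most `1 / n`, then the points `j β + m` with `j < n` are the grid
points `r / n` moved to the right by at most `1 / n`; hence at distance at most `2 / n` to the left
of every `s` there is such a point. -/
theorem exists_rotation_hit {n : ℕ} (hn : 0 < n) {β : ℝ} {p : ℤ} (hp : IsCoprime p (n : ℤ))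
    (h0 : 0 ≤ (n : ℝ) * β - p) (h1 : (n : ℝ) * β - p ≤ 1 / n) (s : ℝ) :
    ∃ (j : ℕ) (m : ℤ), j < n ∧ 0 ≤ s - (j * β + m) ∧ s - (j * β + m) ≤ 2 / n := by
  obtain ⟨u, w, huw⟩ := hp
  have hnR : (0 : ℝ) < n := by exact_mod_cast hn
  have hnZ : (0 : ℤ) < n := by exact_mod_cast hn
  -- the grid point `r / n` lies between `1 / n` and `2 / n` to the left of `s`
  set r : ℤ := ⌊n * s⌋ - 1 with hr
  obtain ⟨j, hj⟩ := Int.eq_ofNat_of_zero_le (Int.emod_nonneg (r * u) hnZ.ne')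
  have hjn : j < n := by
    have := Int.emod_lt_of_pos (r * u) hnZ
    omega
  have hdiv := Int.emod_add_mul_ediv (r * u) n
  rw [hj] at hdiv
  set m : ℤ := r * w + (r * u / n) * p with hm
  have hgrid : (j : ℤ) * p + m * n = r := by
    rw [hm]; linear_combination p * hdiv + r * huw
  have hgridR : (j : ℝ) * p + m * n = r := by exact_mod_cast hgrid
  have hf1 := Int.floor_le ((n : ℝ) * s)
  have hf2 := Int.lt_floor_add_one ((n : ℝ) * s)
  have hrR : (r : ℝ) = ⌊(n : ℝ) * s⌋ - 1 := by rw [hr]; push_cast; ring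
  have hjn' : (j : ℝ) ≤ n := by exact_mod_cast hjn.le
  have hjδ : (j : ℝ) * (n * β - p) ≤ 1 := by
    calc (j : ℝ) * (n * β - p) ≤ n * (1 / n) := by gcongr
      _ = 1 := by field_simp
  have hjδ0 : 0 ≤ (j : ℝ) * (n * β - p) := by positivity
  refine ⟨j, m, hjn, ?_, ?_⟩
  · refine nonneg_of_mul_nonneg_right (a := (n : ℝ)) ?_ hnR
    nlinarith
  · rw [le_div_iff₀ hnR]
    nlinarith

/-! ### The invariant measure as a conjugacy to a rotation -/

/-- The distribution function `h` of `ν`, normalised by `h 0 = 0`, conjugates the lift `T` to the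
translation by `α`. Invariance of `ν` makes `h ∘ T - h` constant, and the constant is the rotation
number because `h` stays at bounded distance from the identity. -/
theorem exists_conjugacy {T : Equiv.Perm ℝ} {ν : Measure ℝ} {Cm Cp α : ℝ}
    (hTmono : StrictMono ⇑T)
    (hrot : Filter.Tendsto (fun m : ℕ => (T ^ m) 0 / (m : ℝ)) Filter.atTop (nhds α))
    (hCm : 0 < Cm) (hCp : 0 < Cp)
    (hνprob : ν (Set.Ico (0 : ℝ) 1) = 1)
    (hνinv : MeasureTheory.Measure.map (⇑T) ν = ν)
    (hνper : MeasureTheory.Measure.map (fun t : ℝ => t + 1) ν = ν)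
    (hcomp : ∀ u v : ℝ, u ≤ v → v ≤ u + 1 →
      Cm * (ν (Set.Icc u v)).toReal ≤ v - u ∧ v - u ≤ Cp * (ν (Set.Icc u v)).toReal) :
    ∃ h : ℝ → ℝ, StrictMono h ∧ (∀ t (m : ℤ), h (t + m) = h t + m) ∧
      (∀ t (m : ℕ), h ((T ^ m) t) = h t + m * α) ∧
      ∀ u v, u ≤ v → v - u ≤ Cp * (h v - h u) := by
  have hper : ∀ a b : ℝ, ν (Set.Ico (a + 1) (b + 1)) = ν (Set.Ico a b) := by
    intro a b
    conv_lhs => rw [← hνper]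
    rw [Measure.map_apply (by fun_prop) measurableSet_Ico]
    congr 1; ext t; simp
  have hinv : ∀ a b : ℝ, ν (Set.Ico (T a) (T b)) = ν (Set.Ico a b) := by
    intro a b
    conv_lhs => rw [← hνinv]
    rw [Measure.map_apply hTmono.monotone.measurable measurableSet_Ico]
    congr 1; ext t; simp [hTmono.le_iff_le, hTmono.lt_iff_lt]
  have hunit : ∀ N : ℤ, ν (Set.Ico (N : ℝ) (N + 1)) = 1 := by
    intro N
    induction N using Int.induction_on with
    | zero => simpa using hνprob
    | succ i ih =>
      rw [← ih, ← hper (i : ℤ)]; push_cast; rfl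
    | pred i ih => rw [← ih, ← hper]; push_cast; simp
  have hsym : ∀ N : ℕ, ν (Set.Ico (-(N : ℝ)) N) ≠ ⊤ := by
    intro N
    induction N with
    | zero => simp
    | succ N ih =>
      have hsub : Set.Ico (-((N + 1 : ℕ) : ℝ)) ((N + 1 : ℕ) : ℝ) ⊆
          Set.Ico (((-(N + 1 : ℤ) : ℤ)) : ℝ) (((-(N + 1 : ℤ) : ℤ)) + 1) ∪
            (Set.Ico (-(N : ℝ)) N ∪ Set.Ico ((N : ℤ) : ℝ) ((N : ℤ) + 1)) := by
        intro t ht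
        simp only [Set.mem_Ico, Set.mem_union] at ht ⊢
        push_cast at ht ⊢
        by_cases h1 : t < -N
        · left; constructor <;> linarith
        · right
          by_cases h2 : t < N
          · left; constructor <;> linarith
          · right; constructor <;> linarith
      refine ne_top_of_le_ne_top ?_ ((measure_mono hsub).trans
        ((measure_union_le _ _).trans (add_le_add le_rfl (measure_union_le _ _))))
      rw [hunit, hunit]
      simp [ih]
  have hfin : ∀ a b : ℝ, ν (Set.Ico a b) ≠ ⊤ := by
    intro a b
    obtain ⟨N, hN⟩ := exists_nat_ge (max (-a) b)
    have h1 := (le_max_left _ _).trans hN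
    have h2 := (le_max_right _ _).trans hN
    exact ne_top_of_le_ne_top (hsym N) (measure_mono (Set.Ico_subset_Ico (by linarith) h2))
  have hadd : ∀ a b c : ℝ, a ≤ b → b ≤ c → (ν (Set.Ico a c)).toReal =
      (ν (Set.Ico a b)).toReal + (ν (Set.Ico b c)).toReal := by
    intro a b c hab hbc
    rw [← ENNReal.toReal_add (hfin _ _) (hfin _ _), ← measure_union ?_ measurableSet_Ico,
      Set.Ico_union_Ico_eq_Ico hab hbc]
    exact Set.disjoint_left.2 fun t h1 h2 => absurd h1.2 (not_lt.2 h2.1)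
  -- one of the two terms always vanishes: `h t` is the signed `ν`-measure between `0` and `t`
  let h : ℝ → ℝ := fun t => (ν (Set.Ico 0 t)).toReal - (ν (Set.Ico t 0)).toReal
  have hD : ∀ a b : ℝ, a ≤ b → (ν (Set.Ico a b)).toReal = h b - h a := by
    intro a b hab
    simp only [h]
    rcases le_total 0 a with ha | ha
    · rw [hadd 0 a b ha hab, Set.Ico_eq_empty (not_lt.2 ha),
        Set.Ico_eq_empty (not_lt.2 (ha.trans hab))]
      simp
    · rcases le_total 0 b with hb | hb
      · rw [hadd a 0 b ha hb, Set.Ico_eq_empty (not_lt.2 ha), Set.Ico_eq_empty (not_lt.2 hb)]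
        simp; ring
      · rw [hadd a b 0 hab hb, Set.Ico_eq_empty (not_lt.2 ha), Set.Ico_eq_empty (not_lt.2 hb)]
        simp
  -- the comparison with Lebesgue measure excludes atoms
  have hatom : ∀ a b : ℝ, a ≤ b → (ν (Set.Icc a b)).toReal = h b - h a := by
    intro a b hab
    have hb : ν {b} = 0 := by
      have h1 := (hcomp b b le_rfl (by linarith)).1
      rw [Set.Icc_self, sub_self] at h1
      have h2 : (ν {b}).toReal = 0 :=
        le_antisymm (nonpos_of_mul_nonpos_right h1 hCm) ENNReal.toReal_nonneg
      have h3 : ν {b} ≠ ⊤ := ne_top_of_le_ne_top (hfin b (b + 1))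
        (measure_mono (by rw [Set.singleton_subset_iff]; constructor <;> linarith))
      exact ((ENNReal.toReal_eq_zero_iff _).1 h2).resolve_right h3
    rw [← hD a b hab, ← Set.Ico_union_right hab]
    congr 1
    refine le_antisymm ((measure_union_le _ _).trans (by rw [hb, add_zero]))
      (measure_mono Set.subset_union_left)
  have hone : ∀ t, h (t + 1) = h t + 1 := by
    intro t
    have h01 : h 1 - h 0 = 1 := by rw [← hD 0 1 zero_le_one, hνprob]; simp
    have key : ∀ a b, a ≤ b → h (b + 1) - h (a + 1) = h b - h a := fun a b hab => by
      rw [← hD a b hab, ← hD _ _ (by linarith), hper]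
    rcases le_total 0 t with ht | ht
    · have := key 0 t ht; rw [zero_add] at this; linarith
    · have := key t 0 ht; rw [zero_add] at this; linarith
  have hint : ∀ t (m : ℤ), h (t + m) = h t + m := by
    intro t m
    induction m using Int.induction_on with
    | zero => simp
    | succ i ih =>
      have := hone (t + (i : ℤ)); push_cast at this ih ⊢; rw [← add_assoc, this, ih]; ring
    | pred i ih =>
      have := hone (t + ((-i - 1 : ℤ))); push_cast at this ih ⊢
      rw [show t + (-(i : ℝ) - 1) + 1 = t + -i by ring] at this
      linarith
  have hCp1 : 1 ≤ Cp := by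
    have h1 := (hcomp 0 1 zero_le_one (by norm_num)).2
    have h01 : h 1 - h 0 = 1 := by have := hone 0; rw [zero_add] at this; linarith
    rw [hatom 0 1 zero_le_one, h01] at h1
    linarith
  have hexp : ∀ u v, u ≤ v → v - u ≤ Cp * (h v - h u) := by
    intro u v huv
    have h1 := Int.floor_le (v - u)
    have h2 := Int.lt_floor_add_one (v - u)
    have h0 : (0 : ℝ) ≤ ⌊v - u⌋ := by exact_mod_cast Int.floor_nonneg.2 (sub_nonneg.2 huv)
    have h3 := (hcomp (u + ⌊v - u⌋) v (by linarith) (by linarith)).2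
    rw [hatom _ _ (by linarith), hint] at h3
    nlinarith
  have hstrict : StrictMono h := fun u v huv => by
    have := hexp u v huv.le
    by_contra! hcon
    nlinarith
  have hTc : ∀ t, h (T t) = h t + (h (T 0) - h 0) := by
    intro t
    have key : ∀ a b, a ≤ b → h (T b) - h (T a) = h b - h a := fun a b hab => by
      rw [← hD a b hab, ← hD _ _ (hTmono.monotone hab), hinv]
    rcases le_total 0 t with ht | ht
    · have := key 0 t ht; linarith
    · have := key t 0 ht; linarith
  have hTm : ∀ t (m : ℕ), h ((T ^ m) t) = h t + m * (h (T 0) - h 0) := by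
    intro t m
    induction m with
    | zero => simp
    | succ m ih => rw [pow_succ', Equiv.Perm.mul_apply, hTc, ih]; push_cast; ring
  have hclose : ∀ t, |h t - h 0 - t| ≤ 1 := by
    intro t
    have h1 := hstrict.monotone (Int.floor_le t)
    have h2 := hstrict.monotone (Int.lt_floor_add_one t).le
    rw [hone] at h2
    have h3 := hint 0 ⌊t⌋
    rw [zero_add] at h3
    have h4 := Int.floor_le t
    have h5 := Int.lt_floor_add_one t
    rw [abs_le]
    constructor <;> linarith
  have hlim : Tendsto (fun m : ℕ => (T ^ m) 0 / (m : ℝ)) atTop (nhds (h (T 0) - h 0)) := by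
    rw [tendsto_iff_norm_sub_tendsto_zero]
    refine squeeze_zero' (Eventually.of_forall fun _ => norm_nonneg _) ?_
      tendsto_one_div_atTop_nhds_zero_nat
    filter_upwards [eventually_gt_atTop 0] with m hm
    have hmR : (0 : ℝ) < m := by exact_mod_cast hm
    have hc := hclose ((T ^ m) 0)
    rw [hTm] at hc
    rw [Real.norm_eq_abs, show (T ^ m) 0 / (m : ℝ) - (h (T 0) - h 0) =
      -((h 0 + m * (h (T 0) - h 0) - h 0 - (T ^ m) 0) / m) by field_simp; ring, abs_neg, abs_div,
      abs_of_pos hmR]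
    gcongr
  have hα := tendsto_nhds_unique hlim hrot
  refine ⟨h, hstrict, hint, fun t m => ?_, hexp⟩
  rw [hTm, hα]

/-! ### The sampling function -/

/-- The jumps of `f` point downwards, so its upper Lipschitz bound survives across the integers. -/
theorem periodic_upper_lipschitz {f : ℝ → ℝ} {γm γp : ℝ} (hγm : 0 < γm) (hγp : 0 < γp)
    (hfper : ∀ t : ℝ, f (t + 1) = f t)
    (hfLip : ∀ u v : ℝ, 0 ≤ u → u < v → v < 1 →
      γm * (v - u) ≤ f v - f u ∧ f v - f u ≤ γp * (v - u))
    {u v : ℝ} (huv : u ≤ v) : f v - f u ≤ γp * (v - u) := by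
  have hfr : ∀ t, f (Int.fract t) = f t := fun t => by
    have hp := (show Function.Periodic f 1 from hfper).sub_int_mul_eq (x := t) ⌊t⌋
    rwa [mul_one, Int.self_sub_floor] at hp
  have hmono : ∀ a b, 0 ≤ a → a ≤ b → b < 1 → f a ≤ f b ∧ f b - f a ≤ γp * (b - a) := by
    intro a b ha hab hb
    rcases hab.eq_or_lt with rfl | hlt
    · simp
    · have := hfLip a b ha hlt hb
      exact ⟨by nlinarith, this.2⟩
  have hu := Int.self_sub_floor u
  have hv := Int.self_sub_floor v
  have hu0 := Int.fract_nonneg u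
  have hv0 := Int.fract_nonneg v
  have hu1 := Int.fract_lt_one u
  have hv1 := Int.fract_lt_one v
  rw [← hfr u, ← hfr v]
  rcases (Int.floor_mono huv).eq_or_lt with heq | hlt
  · have hfl : Int.fract v - Int.fract u = v - u := by rw [← hu, ← hv, heq]; ring
    rw [← hfl]
    exact (hmono _ _ hu0 (by linarith) hv1).2
  · have h1 : (⌊u⌋ : ℝ) + 1 ≤ ⌊v⌋ := by exact_mod_cast hlt
    have h2 := (hmono 0 _ le_rfl hu0 hu1).1
    have h3 := (hmono 0 _ le_rfl hv0 hv1).2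
    have h4 : γp * (Int.fract v - 0) ≤ γp * (v - u) := mul_le_mul_of_nonneg_left (by linarith) hγp.le
    linarith

/-! ### The periodic matrix under cyclic rotation -/

/-- The part of `HPer` that does not depend on the potential: the off-diagonal ones together with
the two corner entries. The two summands may overlap: for `n = 1` the corner is the diagonal entry,
and for `n = 2` the off-diagonal entries equal `2`. -/
def hopping (n : ℕ) : Matrix (Fin n) (Fin n) ℝ :=
  Matrix.of fun i j : Fin n =>
    (if (i : ℕ) + 1 = (j : ℕ) ∨ (j : ℕ) + 1 = (i : ℕ) then 1 else 0) +
    if ((i : ℕ) = 0 ∧ (j : ℕ) = n - 1) ∨ ((i : ℕ) = n - 1 ∧ (j : ℕ) = 0) then (1 : ℝ) else 0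

theorem HPer_eq (lam : ℝ) (f : ℝ → ℝ) (T : Equiv.Perm ℝ) (x : ℝ) (n : ℕ) :
    HPer lam f T x n =
      Matrix.diagonal (fun i : Fin n => lam * f ((T ^ (i : ℕ)) x)) + hopping n := by
  ext i j
  simp [HPer, HDir, hopping, Matrix.diagonal_apply, add_assoc]

theorem hopping_isHermitian (n : ℕ) : (hopping n).IsHermitian := by
  ext i j
  simp only [hopping, Matrix.conjTranspose_apply, Matrix.of_apply, star_trivial]
  congr 1
  · simp only [or_comm]
  · congr 1
    simp only [eq_iff_iff]
    tauto

theorem val_finRotate {n : ℕ} (i : Fin n) : (finRotate n i : ℕ) = (i + 1) % n := by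
  obtain _ | n := n
  · exact i.elim0
  · rw [finRotate_apply, Fin.val_add]
    simp

theorem val_finRotate_pow {n : ℕ} (m : ℕ) (i : Fin n) :
    (((finRotate n) ^ m) i : ℕ) = (i + m) % n := by
  induction m with
  | zero => simp [Nat.mod_eq_of_lt i.2]
  | succ m ih => rw [pow_succ', Equiv.Perm.mul_apply, val_finRotate, ih, Nat.mod_add_mod, add_assoc]

theorem hopping_finRotate {n : ℕ} (i j : Fin n) :
    hopping n (finRotate n i) (finRotate n j) = hopping n i j := by
  have h : ∀ i : Fin n, ((i : ℕ) + 1 < n ∧ (finRotate n i : ℕ) = i + 1) ∨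
      ((i : ℕ) + 1 = n ∧ (finRotate n i : ℕ) = 0) := by
    intro i
    rw [val_finRotate]
    rcases Nat.lt_or_ge (i + 1) n with h | h
    · exact Or.inl ⟨h, Nat.mod_eq_of_lt h⟩
    · have : (i : ℕ) + 1 = n := by omega
      exact Or.inr ⟨this, by rw [this, Nat.mod_self]⟩
  simp only [hopping, Matrix.of_apply]
  rcases h i with ⟨hi, hi'⟩ | ⟨hi, hi'⟩ <;> rcases h j with ⟨hj, hj'⟩ | ⟨hj, hj'⟩ <;>
    rw [hi', hj'] <;> clear h hi' hj' <;> grind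

/-- Rotating the potential cyclically is a conjugation by a permutation matrix, since the hopping
part is rotation invariant. -/
theorem charpoly_rotate {n : ℕ} (d : Fin n → ℝ) (m : ℕ) :
    (Matrix.diagonal (fun i => d (((finRotate n) ^ m) i)) + hopping n).charpoly =
      (Matrix.diagonal d + hopping n).charpoly := by
  have hinv : ∀ i j, hopping n (((finRotate n) ^ m) i) (((finRotate n) ^ m) j) = hopping n i j := by
    induction m with
    | zero => simp
    | succ m ih =>
      intro i j
      rw [pow_succ', Equiv.Perm.mul_apply, Equiv.Perm.mul_apply, hopping_finRotate, ih]
  rw [← Matrix.charpoly_reindex ((finRotate n) ^ m).symm (Matrix.diagonal d + hopping n)]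
  congr 1
  ext i j
  simp [hinv, Matrix.diagonal_apply]

/-- Raising the potential by at most `c` raises each ordered eigenvalue by at most `c`. -/
theorem eigenvalue_le {n : ℕ} {d d' : Fin n → ℝ} {c : ℝ} (hd : ∀ i, d' i ≤ d i + c)
    {a b : Fin n → ℝ} (ham : Monotone a) (hbm : Monotone b)
    (ha : (Matrix.diagonal d + hopping n).charpoly = ∏ i, (X - Polynomial.C (a i)))
    (hb : (Matrix.diagonal d' + hopping n).charpoly = ∏ i, (X - Polynomial.C (b i)))
    (i : Fin n) : b i ≤ a i + c := by
  refine weyl_upper ((Matrix.isHermitian_diagonal d).add (hopping_isHermitian n))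
    (w := fun i => d' i - d i) (fun i => by linarith [hd i]) ham hbm ha ?_ i
  rw [← hb]
  congr 1
  ext i j
  by_cases hij : i = j
  · simp [hij]; ring
  · simp [hij]

/-- For `n = q_k` and all `x, y`:
`|μ̃_i(x) − μ̃_i(y)| ≤ λγ₊C₊/q_{k+1} + 2λγ₊C₊/q_k ≤ 3λγ₊C₊/q_k`. -/
theorem eigenvalue_global_horizontal_comparison
    (f : ℝ → ℝ) (T : Equiv.Perm ℝ) (ν : Measure ℝ)
    (γm γp Cm Cp lam α : ℝ) (q : ℕ → ℕ) (k : ℕ) (μ : ℝ → Fin (q k) → ℝ)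
    (hγm : 0 < γm) (hγp : 0 < γp) (hlam : 0 < lam)
    (hfper : ∀ t : ℝ, f (t + 1) = f t) (hf0 : f 0 = 0)
    (hf1 : Filter.Tendsto f (nhdsWithin 1 (Set.Iio 1)) (nhds 1))
    (hfLip : ∀ u v : ℝ, 0 ≤ u → u < v → v < 1 →
      γm * (v - u) ≤ f v - f u ∧ f v - f u ≤ γp * (v - u))
    (hTmono : StrictMono ⇑T) (hTper : ∀ t : ℝ, T (t + 1) = T t + 1)
    (hαirr : Irrational α)
    (hrot : Filter.Tendsto (fun m : ℕ => (T ^ m) 0 / (m : ℝ)) Filter.atTop (nhds α))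
    (hCm : 0 < Cm) (hCp : 0 < Cp)
    (hνprob : ν (Set.Ico (0 : ℝ) 1) = 1)
    (hνinv : MeasureTheory.Measure.map (⇑T) ν = ν)
    (hνper : MeasureTheory.Measure.map (fun t : ℝ => t + 1) ν = ν)
    (hcomp : ∀ u v : ℝ, u ≤ v → v ≤ u + 1 →
      Cm * (ν (Set.Icc u v)).toReal ≤ v - u ∧ v - u ≤ Cp * (ν (Set.Icc u v)).toReal)
    (hqpos : ∀ m : ℕ, 0 < q m)
    (hqcf : ∀ m : ℕ, ((q m : ℕ) : ℝ) = (GenContFract.of α).dens m)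
    (hμmono : ∀ z : ℝ, Monotone (μ z))
    (hμeig : ∀ z : ℝ, (HPer lam f T z (q k)).charpoly = ∏ i, (X - Polynomial.C (μ z i)))
    (x y : ℝ) (i : Fin (q k)) :
    |μ x i - μ y i| ≤
      lam * γp * Cp / (q (k + 1) : ℝ) + 2 * (lam * γp * Cp) / (q k : ℝ) ∧
    lam * γp * Cp / (q (k + 1) : ℝ) + 2 * (lam * γp * Cp) / (q k : ℝ) ≤
      3 * (lam * γp * Cp) / (q k : ℝ) := by
  have hn : (0 : ℝ) < q k := by exact_mod_cast hqpos k
  have hn1 : (0 : ℝ) < q (k + 1) := by exact_mod_cast hqpos (k + 1)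
  have hK : 0 < lam * γp * Cp := by positivity
  have hqq : (q k : ℝ) ≤ q (k + 1) := by
    rw [hqcf, hqcf]; exact GenContFract.of_den_mono
  obtain ⟨p, hpc, hp⟩ := exists_convergent hαirr hqpos hqcf k
  obtain ⟨h, hstrict, hint, hTm, hexp⟩ :=
    exists_conjugacy hTmono hrot hCm hCp hνprob hνinv hνper hcomp
  have hinvle : (1 : ℝ) / q (k + 1) ≤ 1 / q k := one_div_le_one_div_of_le hn hqq
  -- one-sided Lipschitz bound for the potential, in the coordinate `h` on the circle
  have hG : ∀ (u v : ℝ) (m : ℤ) (c : ℝ), 0 ≤ h v - h u - m → h v - h u - m ≤ c →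
      lam * f v ≤ lam * f u + lam * γp * Cp * c := by
    intro u v m c h0 hc
    have hle : u + m ≤ v := hstrict.le_iff_le.1 (by rw [hint]; linarith)
    have h1 := periodic_upper_lipschitz hγm hγp hfper hfLip hle
    have h2 := hexp _ _ hle
    rw [hint] at h2
    have hfm : f (u + m) = f u := by
      simpa using (show Function.Periodic f 1 from hfper).int_mul m u
    rw [hfm] at h1
    have h3 : γp * (v - (u + m)) ≤ γp * (Cp * c) := by
      gcongr
      exact h2.trans (by gcongr; linarith)
    have h4 : lam * (f v - f u) ≤ lam * (γp * (Cp * c)) := by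
      gcongr; linarith
    linarith
  have hmod : ∀ (l : Fin (q k)) (j : ℕ), j < q k →
      ∃ t : ℤ, (t = 0 ∨ t = 1) ∧ ((l : ℕ) : ℝ) + j =
        (((finRotate (q k)) ^ j) l : ℕ) + t * q k := by
    intro l j hj
    rw [val_finRotate_pow]
    rcases Nat.lt_or_ge (l + j) (q k) with hlt | hge
    · refine ⟨0, Or.inl rfl, ?_⟩
      rw [Nat.mod_eq_of_lt hlt]; push_cast; ring
    · refine ⟨1, Or.inr rfl, ?_⟩
      have hl := l.2
      have hr : ((l : ℕ) + j) % q k = l + j - q k := by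
        rw [Nat.mod_eq_sub_mod hge, Nat.mod_eq_of_lt (by omega)]
      rw [hr, Nat.cast_sub hge]; push_cast; ring
  have hhalf : ∀ x y : ℝ, μ y i ≤ μ x i +
      lam * γp * Cp * (1 / (q (k + 1) : ℝ) + 2 / (q k : ℝ)) := by
    intro x y
    have hx := hμeig x
    have hy := hμeig y
    rw [HPer_eq] at hx hy
    rw [abs_le] at hp
    have h1q : (0 : ℝ) ≤ 1 / q (k + 1) := by positivity
    rcases le_total 0 ((q k : ℝ) * α - p) with hδ | hδ
    · -- `T ^ q k` moves to the right: some `T ^ j x` lies just left of `y`, and the potential along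
      -- the orbit of `y` is compared with the rotated potential of `x`
      obtain ⟨j, m, hj, hs0, hs1⟩ :=
        exists_rotation_hit (hqpos k) hpc hδ (hp.2.trans hinvle) (h y - h x)
      rw [← charpoly_rotate _ j] at hx
      refine eigenvalue_le (fun l => ?_) (hμmono x) (hμmono y) hx hy i
      obtain ⟨t, ht, hlj⟩ := hmod l j hj
      have hljα := congrArg (· * α) hlj
      beta_reduce at hljα
      refine hG _ _ (m + t * p) _ ?_ ?_ <;> rw [hTm, hTm] <;>
        rcases ht with rfl | rfl <;> push_cast at hljα ⊢ <;> linarith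
    · -- `T ^ q k` moves to the left: some `T ^ j y` lies just right of `x`, and the rotated potential
      -- of `y` is compared with that of `x`
      obtain ⟨j, m, hj, hs0, hs1⟩ :=
        exists_rotation_hit (n := q k) (β := -α) (p := -p) (hqpos k) hpc.neg_left
          (by push_cast; linarith) (by push_cast; linarith) (h y - h x)
      rw [← charpoly_rotate _ j] at hy
      refine eigenvalue_le (fun l => ?_) (hμmono x) (hμmono y) hx hy i
      obtain ⟨t, ht, hlj⟩ := hmod l j hj
      have hljα := congrArg (· * α) hlj
      beta_reduce at hljα
      refine hG _ _ (m - t * p) _ ?_ ?_ <;> rw [hTm, hTm] <;>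
        rcases ht with rfl | rfl <;> push_cast at hljα ⊢ <;> linarith
  have hsum : lam * γp * Cp * (1 / (q (k + 1) : ℝ) + 2 / (q k : ℝ)) =
      lam * γp * Cp / (q (k + 1) : ℝ) + 2 * (lam * γp * Cp) / (q k : ℝ) := by ring
  refine ⟨?_, ?_⟩
  · rw [← hsum, abs_le]
    constructor <;> linarith [hhalf x y, hhalf y x]
  · rw [← hsum]
    calc _ ≤ lam * γp * Cp * (1 / (q k : ℝ) + 2 / (q k : ℝ)) := by gcongr
      _ = _ := by ring
end
end

section
/- Let d > 0 and let μ be a Borel probability measure on ℝ that is absolutely continuous with respect to Lebesgue measure with Radon–Nikodym derivative bounded almost everywhere by 1/d. Then for every E ∈ ℝ, ∫_ℝ ln|E′ − E| dμ(E′) ≥ ln(d/(2e)). -/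
/-!
Since `μ ≤ (1/d) • volume` and `μ` has mass one, `∫ ln |E' - E| dμ` is smallest when `μ` is the
uniform measure on the interval of radius `d / 2` about `E`. To see this, let `g` be
`ln (d/2) - ln |· - E|` on that interval and `0` outside. Then `ln |· - E| ≥ ln (d/2) - g`
everywhere, while `g ≥ 0` a.e. and `∫ g = d` for Lebesgue measure, so `∫ g dμ ≤ 1`. Integrating
against `μ` gives `∫ ln |E' - E| dμ ≥ ln (d/2) - 1 = ln (d / (2e))`.
-/

open MeasureTheory Polynomial Filter

noncomputable section

attribute [local instance] Matrix.normedAddCommGroup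

/-- If `μ` is a Borel probability measure on `ℝ`, absolutely continuous
with density bounded a.e. by `1/d`, then its logarithmic potential at every `E` is at least
`ln (d / (2e))` (the integral being `+∞`, i.e. not Bochner-integrable, is allowed; note that
the negative part of the integrand is always `μ`-integrable under these hypotheses). -/
theorem log_potential_lower_bound
    (d : ℝ) (hd : 0 < d) (μ : Measure ℝ) [IsProbabilityMeasure μ]
    (hac : μ ≪ MeasureTheory.volume)
    (hbound : ∀ᵐ E' ∂(MeasureTheory.volume : Measure ℝ),
      μ.rnDeriv MeasureTheory.volume E' ≤ ENNReal.ofReal (1 / d)) (E : ℝ) :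
    (¬ MeasureTheory.Integrable (fun E' : ℝ => Real.log |E' - E|) μ) ∨
      Real.log (d / (2 * Real.exp 1)) ≤ ∫ E', Real.log |E' - E| ∂μ := by
  by_cases hint : Integrable (fun E' : ℝ => Real.log |E' - E|) μ
  swap
  · exact Or.inl hint
  right
  have hμ : μ ≤ ENNReal.ofReal (1 / d) • (volume : Measure ℝ) := by
    rw [← Measure.withDensity_rnDeriv_eq μ volume hac, ← withDensity_const]
    exact withDensity_mono hbound
  have hr : 0 < d / 2 := by positivity
  set s : Set ℝ := Set.Ioc (E - d / 2) (E + d / 2) with hs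
  set g : ℝ → ℝ := s.indicator fun x => Real.log (d / 2) - Real.log |x - E| with hg
  have hii : IntervalIntegrable (fun x => Real.log |x - E|) volume (E - d / 2) (E + d / 2) := by
    have h : IntervalIntegrable Real.log volume (-(d / 2)) (d / 2) :=
      intervalIntegral.intervalIntegrable_log'
    have h2 := h.comp_sub_right E
    simp only [Real.log_abs]
    convert h2 using 1 <;> ring
  have hgi : Integrable g volume := by
    rw [hg, integrable_indicator_iff measurableSet_Ioc]
    exact ((intervalIntegrable_iff_integrableOn_Ioc_of_le (by linarith)).1
      ((intervalIntegrable_const (c := Real.log (d / 2))).sub hii))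
  have hgint : ∫ x, g x = d := by
    rw [hg, integral_indicator measurableSet_Ioc,
      ← intervalIntegral.integral_of_le (by linarith),
      intervalIntegral.integral_sub intervalIntegrable_const hii,
      intervalIntegral.integral_const]
    simp only [Real.log_abs]
    rw [intervalIntegral.integral_comp_sub_right (fun x => Real.log x) E, integral_log,
      show E + d / 2 - E = d / 2 by ring, show E - d / 2 - E = -(d / 2) by ring, Real.log_neg_eq_log,
      smul_eq_mul]
    ring
  have hgi' : Integrable g (ENNReal.ofReal (1 / d) • volume) :=
    hgi.smul_measure ENNReal.ofReal_ne_top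
  -- Nonnegativity may fail at `x = E`, where `Real.log 0 = 0`.
  have hg0 : 0 ≤ᵐ[ENNReal.ofReal (1 / d) • (volume : Measure ℝ)] g := by
    refine Measure.ae_smul_measure ?_ _
    have hne : ∀ᵐ x : ℝ, x ≠ E := by simp [ae_iff]
    filter_upwards [hne] with x hx
    refine Set.indicator_apply_nonneg (fun hxs => ?_)
    have : |x - E| ≤ d / 2 := abs_le.2 ⟨by linarith [hxs.1], by linarith [hxs.2]⟩
    exact sub_nonneg.2 (Real.log_le_log (abs_pos.2 (sub_ne_zero.2 hx)) this)
  have hgμ : ∫ x, g x ∂μ ≤ 1 := by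
    calc ∫ x, g x ∂μ ≤ ∫ x, g x ∂(ENNReal.ofReal (1 / d) • volume) :=
          integral_mono_measure hμ hg0 hgi'
      _ = 1 := by
          rw [integral_smul_measure, hgint, ENNReal.toReal_ofReal (by positivity), smul_eq_mul]
          field_simp
  have hpt : ∀ x, Real.log (d / 2) - g x ≤ Real.log |x - E| := by
    intro x
    by_cases hx : x ∈ s
    · simp [hg, hx]
    · simp only [hg, Set.indicator_of_notMem hx, sub_zero]
      refine Real.log_le_log hr ?_
      by_contra! hlt
      obtain ⟨h1, h2⟩ := abs_lt.1 hlt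
      exact hx ⟨by linarith, by linarith⟩
  have hgi_μ : Integrable g μ := hgi'.mono_measure hμ
  have key := integral_mono ((integrable_const _).sub hgi_μ) hint hpt
  have hsub : ∫ x, (Real.log (d / 2) - g x) ∂μ = Real.log (d / 2) - ∫ x, g x ∂μ := by
    rw [integral_sub (integrable_const _) hgi_μ]
    simp
  have hlog : Real.log (d / (2 * Real.exp 1)) = Real.log (d / 2) - 1 := by
    rw [← div_div, Real.log_div hr.ne' (Real.exp_pos 1).ne', Real.log_exp]
  have key' : ∫ x, (Real.log (d / 2) - g x) ∂μ ≤ ∫ x, Real.log |x - E| ∂μ := key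
  linarith
end
end
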